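/- Dynamical Hardy uncertainty principle for the free Schrödinger evolution: Let d ≥ 1 be an integer, T > 0, and α, β, C, C' > 0 real numbers with α·β > 1/(16·T²). Let f : ℝ^d → ℂ be measurable with |f(y)| ≤ C·exp(−α·‖y‖²) for all y (in particular f is integrable), and define u_T : ℝ^d → ℂ by u_T(x) = ∫_{ℝ^d} exp(i·‖x−y‖²/(4T))·f(y) dy. If |u_T(x)| ≤ C'·exp(−β·‖x‖²) for all x ∈ ℝ^d, then f = 0 almost everywhere. -/

import Mathlib

open MeasureTheory Real

/-- Phragmen-Lindelof in the first quadrant, after multiplication by a Gaussian. -/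
lemma quadrant_bound (H : ℂ → ℂ) (hH : Differentiable ℂ H) (a c M : ℝ) (ha : 0 < a) (hac : a < c)
    (h1 : ∀ z, ‖H z‖ ≤ M * Real.exp (c * z.re ^ 2 - (c - a) * z.im ^ 2))
    (h2 : ∀ x : ℝ, ‖H x‖ ≤ M) (z : ℂ) (hre : 0 ≤ z.re) (him : 0 ≤ z.im) : ‖H z‖ ≤ M := by
  have hM : 0 ≤ M := le_trans (norm_nonneg _) (h2 0)
  have hca : 0 < c - a := by linarith
  have hc : 0 < c := by linarith
  by_cases hz : c * z.re ^ 2 - (c - a) * z.im ^ 2 ≤ 0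
  · refine (h1 z).trans ?_
    have := Real.exp_le_one_iff.2 hz
    nlinarith
  push Not at hz
  set k : ℝ := √(c / (c - a)) with hk
  have hk0 : 0 < k := Real.sqrt_pos.2 (by positivity)
  have hksq : k ^ 2 = c / (c - a) := Real.sq_sqrt (by positivity)
  set θ : ℝ := Real.arctan k with hθ
  have hθ0 : 0 < θ := Real.arctan_pos.2 hk0
  have hθ2 : θ < π / 2 := Real.arctan_lt_pi_div_two k
  have hz0 : 0 < z.re := by
    rcases hre.lt_or_eq with h | h
    · exact h
    · rw [← h] at hz; nlinarith [mul_nonneg hca.le (sq_nonneg z.im)]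
  have hzne : z ≠ 0 := by rintro rfl; simp at hz0
  have key : ‖(fun w => H (Complex.exp w)) (Complex.log z)‖ ≤ M := by
    apply PhragmenLindelof.horizontal_strip (f := fun w => H (Complex.exp w)) (z := Complex.log z)
      (a := 0) (b := θ)
    · exact (hH.comp Complex.differentiable_exp).diffContOnCl
    · refine ⟨2, ?_, c, ?_⟩
      · rw [lt_div_iff₀ (by linarith)]; linarith
      · refine Asymptotics.IsBigO.of_bound M (Filter.Eventually.of_forall fun w => ?_)
        refine (h1 _).trans ?_
        rw [Real.norm_of_nonneg (Real.exp_nonneg _)]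
        gcongr
        have e1 : (Complex.exp w).re ^ 2 ≤ Real.exp (2 * |w.re|) := by
          rw [Complex.exp_re, mul_pow, ← Real.exp_nat_mul]
          calc _ ≤ Real.exp (((2:ℕ):ℝ) * w.re) * 1 := by
                gcongr; exact Real.cos_sq_le_one _
            _ ≤ _ := by
                rw [mul_one]; push_cast; gcongr; exact le_abs_self _
        nlinarith [mul_nonneg hca.le (sq_nonneg (Complex.exp w).im),
          mul_le_mul_of_nonneg_left e1 hc.le]
    · intro w hw
      have : Complex.exp w = ((Real.exp w.re : ℝ) : ℂ) := by
        apply Complex.ext <;> simp [Complex.exp_re, Complex.exp_im, hw, -Complex.ofReal_exp]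
      simp only [this]
      exact h2 _
    · intro w hw
      refine (h1 _).trans ?_
      have hh : c * (Complex.exp w).re ^ 2 - (c - a) * (Complex.exp w).im ^ 2 ≤ 0 := by
        rw [Complex.exp_re, Complex.exp_im, hw]
        have hs : Real.sin θ = k * Real.cos θ := by
          have h3 : Real.tan θ = k := Real.tan_arctan k
          rw [← h3, Real.tan_mul_cos (Real.cos_pos_of_mem_Ioo ⟨by linarith, hθ2⟩).ne']
        rw [hs]
        have : (c - a) * (Real.exp w.re * (k * Real.cos θ)) ^ 2
            = ((c - a) * k ^ 2) * (Real.exp w.re * Real.cos θ) ^ 2 := by ring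
        rw [this, hksq, mul_div_cancel₀ _ hca.ne']
        linarith
      have := Real.exp_le_one_iff.2 hh
      nlinarith
    · rw [Complex.log_im]; exact Complex.arg_nonneg_iff.2 him
    · rw [Complex.log_im, Complex.arg_of_re_nonneg hre, ← Real.arctan_tan (x := Real.arcsin _)]
      · apply Real.arctan_strictMono.monotone
        rw [← Complex.arg_of_re_nonneg hre, Complex.tan_arg, div_le_iff₀ hz0]
        apply le_of_sq_le_sq _ (by positivity)
        rw [mul_pow, hksq, div_mul_eq_mul_div, le_div_iff₀ hca]
        linarith
      · rw [← Complex.arg_of_re_nonneg hre]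
        have := Complex.abs_arg_lt_pi_div_two_iff.2 (Or.inl hz0)
        exact (abs_lt.1 this).1
      · rw [← Complex.arg_of_re_nonneg hre]
        have := Complex.abs_arg_lt_pi_div_two_iff.2 (Or.inl hz0)
        exact (abs_lt.1 this).2
  simpa [Complex.exp_log hzne] using key

lemma hardy_one_dim (h : ℂ → ℂ) (hh : Differentiable ℂ h) (a b M : ℝ) (ha : 0 < a) (hab : a < b)
    (h1 : ∀ z, ‖h z‖ ≤ M * Real.exp (a * z.im ^ 2))
    (h2 : ∀ x : ℝ, ‖h x‖ ≤ M * Real.exp (-b * x ^ 2)) (z : ℂ) : h z = 0 := by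
  have hM : 0 ≤ M := by simpa using (norm_nonneg _).trans (h2 0)
  obtain ⟨c, hac, hcb⟩ := exists_between hab
  set H : ℂ → ℂ := fun z => h z * Complex.exp (c * z ^ 2) with hHdef
  have hn : ∀ z, ‖H z‖ = ‖h z‖ * Real.exp (c * z.re ^ 2 - c * z.im ^ 2) := by
    intro z
    simp only [hHdef, norm_mul, Complex.norm_exp]
    congr 2
    simp [pow_two]; ring
  have hH : Differentiable ℂ H := by fun_prop
  have H1 : ∀ z, ‖H z‖ ≤ M * Real.exp (c * z.re ^ 2 - (c - a) * z.im ^ 2) := by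
    intro z
    rw [hn]
    calc _ ≤ M * Real.exp (a * z.im ^ 2) * Real.exp (c * z.re ^ 2 - c * z.im ^ 2) := by
          gcongr; exact h1 z
      _ = _ := by rw [mul_assoc, ← Real.exp_add]; congr 2; ring
  have H2' : ∀ x : ℝ, ‖H x‖ ≤ M * Real.exp (-(b - c) * x ^ 2) := by
    intro x
    rw [hn]
    calc _ ≤ M * Real.exp (-b * x ^ 2) * Real.exp (c * (x:ℂ).re ^ 2 - c * (x:ℂ).im ^ 2) := by
          gcongr; exact h2 x
      _ = _ := by rw [mul_assoc, ← Real.exp_add]; congr 2; simp; ring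
  have H2 : ∀ x : ℝ, ‖H x‖ ≤ M := by
    intro x
    refine (H2' x).trans ?_
    have : Real.exp (-(b - c) * x ^ 2) ≤ 1 := Real.exp_le_one_iff.2 (by nlinarith [sq_nonneg x])
    nlinarith
  have up : ∀ G : ℂ → ℂ, Differentiable ℂ G →
      (∀ z, ‖G z‖ ≤ M * Real.exp (c * z.re ^ 2 - (c - a) * z.im ^ 2)) → (∀ x : ℝ, ‖G x‖ ≤ M) →
      ∀ z : ℂ, 0 ≤ z.re → ‖G z‖ ≤ M := by
    intro G hG G1 G2 z hz
    rcases le_total 0 z.im with hi | hi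
    · exact quadrant_bound G hG a c M ha hac G1 G2 z hz hi
    · have := quadrant_bound (fun z => star (G (star z))) (fun z => by
          have := (hG (star z)).star_star
          rw [star_star] at this
          exact this) a c M ha hac
        (fun z => by simpa using G1 (star z)) (fun x => by simpa using G2 x) (star z)
        (by simpa using hz) (by simpa using hi)
      simpa using this
  have bd : ∀ z, ‖H z‖ ≤ M := by
    intro z
    rcases le_total 0 z.re with hr | hr
    · exact up H hH H1 H2 z hr
    · have := up (fun z => H (-z)) (by fun_prop) (fun z => by simpa using H1 (-z))
        (fun x => by simpa using H2 (-x)) (-z) (by simpa using hr)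
      simpa using this
  have hconst : ∀ z w, H z = H w := fun z w => hH.apply_eq_apply_of_bounded
    (isBounded_iff_forall_norm_le.2 ⟨M, by rintro _ ⟨z, rfl⟩; exact bd z⟩) z w
  have hlim : Filter.Tendsto (fun x : ℝ => M * Real.exp (-(b - c) * x ^ 2)) Filter.atTop
      (nhds (M * 0)) := by
    refine Filter.Tendsto.const_mul _ (Real.tendsto_exp_atBot.comp ?_)
    exact (Filter.tendsto_pow_atTop two_ne_zero).const_mul_atTop_of_neg (by linarith)
  have : ‖H z‖ ≤ 0 := by
    rw [mul_zero] at hlim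
    exact ge_of_tendsto' hlim fun x => by rw [hconst z x]; exact H2' x
  have h0 : H z = 0 := norm_le_zero_iff.1 this
  exact (mul_eq_zero.1 h0).resolve_right (Complex.exp_ne_zero _)

section
open scoped FourierTransform SchwartzMap

variable {V : Type*} [NormedAddCommGroup V] [InnerProductSpace ℝ V] [FiniteDimensional ℝ V]
  [MeasurableSpace V] [BorelSpace V]

lemma ae_zero_of_fourier_zero (g : V → ℂ) (hg : Integrable g)
    (h0 : ∀ w, ∫ y, Complex.exp (-(Complex.I * (inner ℝ w y : ℝ))) * g y = 0) : g =ᵐ[volume] 0 := by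
  have hF : ∀ w, 𝓕 g w = 0 := by
    intro w
    rw [Real.fourier_eq', ← h0 ((2 * π) • w)]
    congr 1; ext y
    simp only [smul_eq_mul, inner_smul_left, real_inner_comm]
    congr 2
    simp; ring
  refine ae_eq_zero_of_integral_contDiff_smul_eq_zero hg.locallyIntegrable fun ψ hψ hψc => ?_
  have hc : HasCompactSupport (fun x => (ψ x : ℂ)) := hψc.comp_left (g := fun x : ℝ => (x : ℂ)) (by simp)
  let Ψ : 𝓢(V, ℂ) := hc.toSchwartzMap (Complex.ofRealCLM.contDiff.comp hψ)
  have hΨ : ∀ x, Ψ x = (ψ x : ℂ) := fun x => rfl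
  let Φ : 𝓢(V, ℂ) := 𝓕⁻ Ψ
  have e : 𝓕 Φ = Ψ := by simp [Φ]
  have e2 : 𝓕 (Φ : V → ℂ) = (Ψ : V → ℂ) := by rw [← e]; exact (SchwartzMap.fourier_coe Φ).symm
  have := VectorFourier.integral_fourierIntegral_smul_eq_flip (L := innerₗ V) (μ := volume) (ν := volume)
      Real.continuous_fourierChar continuous_inner Φ.integrable hg
  rw [flip_innerₗ] at this
  change ∫ ξ, 𝓕 (Φ : V → ℂ) ξ • g ξ = ∫ x, Φ x • 𝓕 g x at this
  rw [e2] at this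
  simp only [hF, smul_zero, integral_zero, hΨ] at this
  simpa using this

lemma gauss_integrable (α : ℝ) (hα : 0 < α) (r : ℝ) (v : V) :
    Integrable (fun y : V => Real.exp (-α * ‖y‖ ^ 2 + r * inner ℝ v y)) := by
  have := (GaussianFourier.integrable_cexp_neg_mul_sq_norm_add (b := (α : ℂ)) (by simpa using hα) (r : ℂ) v).norm
  refine this.congr (Filter.Eventually.of_forall fun y => ?_)
  simp [Complex.norm_exp, ← Complex.ofReal_pow]

lemma gauss_integral (α : ℝ) (hα : 0 < α) (v : V) (hv : ‖v‖ = 1) :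
    ∃ K : ℝ, 0 ≤ K ∧ ∀ r : ℝ, ∫ y : V, Real.exp (-α * ‖y‖ ^ 2 + r * inner ℝ v y) = K * Real.exp (1 / (4 * α) * r ^ 2) := by
  refine ⟨‖((π : ℂ) / (α : ℂ)) ^ (Module.finrank ℝ V / 2 : ℂ)‖, norm_nonneg _, fun r => ?_⟩
  have := GaussianFourier.integral_cexp_neg_mul_sq_norm_add (b := (α : ℂ)) (by simpa using hα) (r : ℂ) v
  have e : ∀ y : V, Complex.exp (-(α:ℂ) * ‖y‖ ^ 2 + r * (inner ℝ v y : ℝ))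
     = ((Real.exp (-α * ‖y‖ ^ 2 + r * inner ℝ v y) : ℝ) : ℂ) := by intro y; push_cast; rfl
  simp only [e] at this
  rw [integral_complex_ofReal] at this
  have := congrArg norm this
  rw [Complex.norm_real, Real.norm_of_nonneg (integral_nonneg fun _ => (Real.exp_nonneg _)), norm_mul, hv] at this
  rw [this, Complex.norm_exp]
  congr 2
  have : (r:ℂ) ^ 2 * ((1:ℝ):ℂ) ^ 2 / (4 * α) = ((1 / (4 * α) * r ^ 2 : ℝ) : ℂ) := by
    push_cast; ring
  rw [this, Complex.ofReal_re]

lemma laplace_differentiable (g : V → ℂ) (hg : Measurable g) (C α : ℝ) (hC : 0 < C) (hα : 0 < α)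
    (hd : ∀ y, ‖g y‖ ≤ C * Real.exp (-α * ‖y‖ ^ 2)) (v : V) (hv : ‖v‖ = 1) :
    Differentiable ℂ (fun z : ℂ => ∫ y, Complex.exp (-(Complex.I * z * (inner ℝ v y : ℝ))) * g y) := by
  intro z₀
  have hin : ∀ y : V, |inner ℝ v y| ≤ ‖y‖ := fun y => by
    simpa [hv] using abs_real_inner_le_norm v y
  have hm : Measurable fun y : V => ((inner ℝ v y : ℝ) : ℂ) := by fun_prop
  set R : ℝ := |z₀.im| + 2 with hR
  have hbd : ∀ y : V, ∀ z ∈ Metric.ball z₀ 1,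
      ‖Complex.exp (-(Complex.I * z * (inner ℝ v y : ℝ)))‖ ≤ Real.exp ((|z₀.im| + 1) * ‖y‖) := by
    intro y z hz
    rw [Complex.norm_exp]
    gcongr
    have h1 : |z.im| ≤ |z₀.im| + 1 := by
      have : |z.im - z₀.im| ≤ 1 := by
        rw [Metric.mem_ball, dist_eq_norm] at hz
        exact (Complex.abs_im_le_norm (z - z₀)).trans hz.le
      have := abs_sub_abs_le_abs_sub z.im z₀.im
      linarith
    calc (-(Complex.I * z * (inner ℝ v y : ℝ))).re = z.im * inner ℝ v y := by simp
      _ ≤ |z.im| * |inner ℝ v y| := by rw [← abs_mul]; exact le_abs_self _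
      _ ≤ _ := by gcongr; exact hin y
  have hexp : ∀ y : V, Real.exp (R * ‖y‖) * Real.exp (-α * ‖y‖ ^ 2) ≤
      Real.exp (R ^ 2 / (2 * α)) * Real.exp (-(α / 2) * ‖y‖ ^ 2 + 0 * inner ℝ v y) := by
    intro y
    rw [← Real.exp_add, ← Real.exp_add]
    apply Real.exp_le_exp.2
    have : R ^ 2 / (2 * α) + (-(α / 2) * ‖y‖ ^ 2 + 0 * inner ℝ v y) - (R * ‖y‖ + -α * ‖y‖ ^ 2)
        = (R - α * ‖y‖) ^ 2 / (2 * α) := by field_simp; ring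
    have h2 : 0 ≤ (R - α * ‖y‖) ^ 2 / (2 * α) := by positivity
    linarith
  have hbint : Integrable (fun y : V => C * (Real.exp (R ^ 2 / (2 * α)) *
      Real.exp (-(α / 2) * ‖y‖ ^ 2 + 0 * inner ℝ v y))) :=
    ((gauss_integrable (α / 2) (by positivity) 0 v).const_mul _).const_mul _
  refine (hasDerivAt_integral_of_dominated_loc_of_deriv_le (s := Metric.ball z₀ 1)
    (F' := fun z y => Complex.exp (-(Complex.I * z * (inner ℝ v y : ℝ))) *
      (-(Complex.I * 1 * (inner ℝ v y : ℝ))) * g y)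
    (bound := fun y : V => C * (Real.exp (R ^ 2 / (2 * α)) *
      Real.exp (-(α / 2) * ‖y‖ ^ 2 + 0 * inner ℝ v y)))
    (Metric.ball_mem_nhds _ one_pos) ?_ ?_ ?_ ?_ hbint ?_).2.differentiableAt
  · exact Filter.Eventually.of_forall fun z => by fun_prop
  · refine hbint.mono' (by fun_prop) (Filter.Eventually.of_forall fun y => ?_)
    rw [norm_mul]
    calc _ ≤ Real.exp (R * ‖y‖) * (C * Real.exp (-α * ‖y‖ ^ 2)) := by
          gcongr
          · refine (hbd y z₀ (Metric.mem_ball_self one_pos)).trans ?_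
            gcongr; linarith
          · exact hd y
      _ = C * (Real.exp (R * ‖y‖) * Real.exp (-α * ‖y‖ ^ 2)) := by ring
      _ ≤ _ := mul_le_mul_of_nonneg_left (hexp y) hC.le
  · fun_prop
  · refine Filter.Eventually.of_forall fun y z hz => ?_
    rw [norm_mul, norm_mul]
    have hl : ‖-(Complex.I * 1 * ((inner ℝ v y : ℝ) : ℂ))‖ ≤ Real.exp ‖y‖ := by
      simp only [norm_neg, norm_mul, Complex.norm_I, norm_one, one_mul, Complex.norm_real, Real.norm_eq_abs]
      have := Real.add_one_le_exp ‖y‖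
      have := hin y
      linarith
    calc _ ≤ (Real.exp ((|z₀.im| + 1) * ‖y‖) * Real.exp ‖y‖) * (C * Real.exp (-α * ‖y‖ ^ 2)) := by
          gcongr
          · exact hbd y z hz
          · exact hd y
      _ = C * (Real.exp (R * ‖y‖) * Real.exp (-α * ‖y‖ ^ 2)) := by
          rw [← Real.exp_add, hR]; ring_nf
      _ ≤ _ := mul_le_mul_of_nonneg_left (hexp y) hC.le
  · refine Filter.Eventually.of_forall fun y z hz => ?_
    have h := (((hasDerivAt_id z).const_mul Complex.I).mul_const ((inner ℝ v y : ℝ) : ℂ)).neg.cexp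
    exact h.mul_const (g y)

lemma laplace_bound (g : V → ℂ) (C α : ℝ) (hC : 0 < C) (hα : 0 < α)
    (hd : ∀ y, ‖g y‖ ≤ C * Real.exp (-α * ‖y‖ ^ 2)) (v : V) (hv : ‖v‖ = 1) :
    ∃ K : ℝ, 0 ≤ K ∧ ∀ z : ℂ, ‖∫ y, Complex.exp (-(Complex.I * z * (inner ℝ v y : ℝ))) * g y‖
      ≤ K * Real.exp (1 / (4 * α) * z.im ^ 2) := by
  obtain ⟨K, hK, h⟩ := gauss_integral α hα v hv
  refine ⟨C * K, by positivity, fun z => ?_⟩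
  rw [mul_assoc, ← h, ← integral_const_mul]
  refine norm_integral_le_of_norm_le ((gauss_integrable α hα z.im v).const_mul C)
    (Filter.Eventually.of_forall fun y => ?_)
  rw [norm_mul, Complex.norm_exp]
  have : (-(Complex.I * z * (inner ℝ v y : ℝ))).re = z.im * inner ℝ v y := by simp
  rw [this, Real.exp_add]
  calc _ ≤ Real.exp (z.im * inner ℝ v y) * (C * Real.exp (-α * ‖y‖ ^ 2)) := by gcongr; exact hd y
    _ = _ := by ring

end

/-- **Dynamical Hardy uncertainty principle for the free Schrödinger evolution.**
If `|f y| ≤ C exp (-α ‖y‖²)`, and the (absolutely convergent) oscillatory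
integral `u_T x = ∫ exp (i ‖x - y‖² / (4T)) f y dy` satisfies
`|u_T x| ≤ C' exp (-β ‖x‖²)` with `α β > 1/(16 T²)`, then `f = 0` a.e. -/
theorem dynamical_hardy_uncertainty_principle
    (d : ℕ) (hd : 1 ≤ d) (T : ℝ) (hT : 0 < T)
    (α β C C' : ℝ) (hα : 0 < α) (hβ : 0 < β) (hC : 0 < C) (hC' : 0 < C')
    (hαβ : 1 / (16 * T ^ 2) < α * β)
    (f : EuclideanSpace ℝ (Fin d) → ℂ) (hf : Measurable f)
    (hdecay : ∀ y, ‖f y‖ ≤ C * Real.exp (-α * ‖y‖ ^ 2))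
    (uT : EuclideanSpace ℝ (Fin d) → ℂ)
    (huT : ∀ x, uT x = ∫ y, Complex.exp (Complex.I * ((‖x - y‖ ^ 2 : ℝ) / (4 * T))) * f y)
    (huTdecay : ∀ x, ‖uT x‖ ≤ C' * Real.exp (-β * ‖x‖ ^ 2)) :
    f =ᵐ[volume] 0 := by
  have : Nontrivial (EuclideanSpace ℝ (Fin d)) := by
    have : Nonempty (Fin d) := ⟨⟨0, hd⟩⟩
    infer_instance
  set g : EuclideanSpace ℝ (Fin d) → ℂ :=
    fun y => Complex.exp (((‖y‖ ^ 2 / (4 * T) : ℝ) : ℂ) * Complex.I) * f y with hgdef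
  have hgm : Measurable g := by fun_prop
  have hgn : ∀ y, ‖g y‖ = ‖f y‖ := fun y => by
    simp only [hgdef, norm_mul, Complex.norm_exp_ofReal_mul_I, one_mul]
  have hgd : ∀ y, ‖g y‖ ≤ C * Real.exp (-α * ‖y‖ ^ 2) := fun y => (hgn y).trans_le (hdecay y)
  have hgi : Integrable g := by
    refine ((gauss_integrable α hα 0 (0 : EuclideanSpace ℝ (Fin d))).const_mul C).mono'
      hgm.aestronglyMeasurable (Filter.Eventually.of_forall fun y => ?_)
    simpa using hgd y
  have hcomp : ∀ (t : ℝ) (v : EuclideanSpace ℝ (Fin d)),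
      ‖∫ y, Complex.exp (-(Complex.I * t * (inner ℝ v y : ℝ))) * g y‖ = ‖uT ((2 * T * t) • v)‖ := by
    intro t v
    have e : ∀ y, Complex.exp (Complex.I * ((‖(2 * T * t) • v - y‖ ^ 2 : ℝ) / (4 * T))) * f y =
        Complex.exp (((‖(2 * T * t) • v‖ ^ 2 / (4 * T) : ℝ) : ℂ) * Complex.I) *
          (Complex.exp (-(Complex.I * t * (inner ℝ v y : ℝ))) * g y) := by
      intro y
      have hT' : (T : ℂ) ≠ 0 := by exact_mod_cast hT.ne'
      rw [hgdef, ← mul_assoc, ← mul_assoc, ← Complex.exp_add, ← Complex.exp_add,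
        norm_sub_sq_real, real_inner_smul_left]
      congr 2
      push_cast
      field_simp
      ring
    rw [huT]
    simp only [e]
    rw [integral_const_mul, norm_mul, Complex.norm_exp_ofReal_mul_I, one_mul]
  have hzero : ∀ w, ∫ y, Complex.exp (-(Complex.I * (inner ℝ w y : ℝ))) * g y = 0 := by
    have hunit : ∀ v : EuclideanSpace ℝ (Fin d), ‖v‖ = 1 → ∀ z : ℂ,
        ∫ y, Complex.exp (-(Complex.I * z * (inner ℝ v y : ℝ))) * g y = 0 := by
      intro v hv
      obtain ⟨K, hK, hb⟩ := laplace_bound g C α hC hα hgd v hv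
      refine hardy_one_dim _ (laplace_differentiable g hgm C α hC hα hgd v hv)
        (1 / (4 * α)) (4 * T ^ 2 * β) (max K C') (by positivity) ?_ ?_ ?_
      · rw [div_lt_iff₀ (by positivity)] at hαβ ⊢
        linarith
      · intro z
        refine (hb z).trans ?_
        gcongr
        exact le_max_left _ _
      · intro t
        rw [hcomp]
        refine (huTdecay _).trans ?_
        have : -β * ‖(2 * T * t) • v‖ ^ 2 = -(4 * T ^ 2 * β) * t ^ 2 := by
          rw [norm_smul, hv, mul_one, Real.norm_eq_abs, sq_abs]; ring
        rw [this]
        gcongr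
        exact le_max_right _ _
    intro w
    obtain ⟨v, hv, t, hw⟩ : ∃ v : EuclideanSpace ℝ (Fin d), ‖v‖ = 1 ∧ ∃ t : ℝ, w = t • v := by
      by_cases h : w = 0
      · obtain ⟨v, hv⟩ := exists_norm_eq (EuclideanSpace ℝ (Fin d)) zero_le_one
        exact ⟨v, hv, 0, by simp [h]⟩
      · have hn : ‖w‖ ≠ 0 := norm_ne_zero_iff.2 h
        exact ⟨‖w‖⁻¹ • w, norm_smul_inv_norm (𝕜 := ℝ) h, ‖w‖, by rw [smul_smul, mul_inv_cancel₀ hn, one_smul]⟩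
    rw [hw, ← hunit v hv t]
    congr 1; ext y
    rw [real_inner_smul_left]
    push_cast
    ring_nf
  have hg0 := ae_zero_of_fourier_zero g hgi hzero
  filter_upwards [hg0] with y hy
  have : ‖f y‖ = 0 := by rw [← hgn, hy]; simp
  simpa using this
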